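/- For the m×n grid graph G_{m,n} = P_m □ P_n with 4 ≤ m ≤ n, srd(G_{m,n}) = 4. -/

import Mathlib

open SimpleGraph

/-- `F` is an edge-cut of `G` separating `u` and `v`. -/
def CutsBetween {V : Type*} (G : SimpleGraph V) (u v : V) (F : Finset (Sym2 V)) : Prop :=
  ↑F ⊆ G.edgeSet ∧ ¬ (G.deleteEdges ↑F).Reachable u v

/-- `lam G u v` is the minimum number of edges in an edge-cut of `G` separating `u` and `v`. -/
noncomputable def lam {V : Type*} (G : SimpleGraph V) (u v : V) : ℕ :=
  sInf {n | ∃ F : Finset (Sym2 V), CutsBetween G u v F ∧ F.card = n}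

/-- `c` is a strong rainbow disconnection coloring of `G`: every pair of distinct vertices
admits a rainbow minimum edge-cut separating them. -/
def IsSRDColoring {V : Type*} (G : SimpleGraph V) (c : Sym2 V → ℕ) : Prop :=
  ∀ u v : V, u ≠ v → ∃ F : Finset (Sym2 V),
    CutsBetween G u v F ∧ F.card = lam G u v ∧ Set.InjOn c ↑F

/-- The strong rainbow disconnection number of `G`. -/
noncomputable def srd {V : Type*} (G : SimpleGraph V) : ℕ :=
  sInf {k | ∃ c : Sym2 V → ℕ, (∀ e ∈ G.edgeSet, c e < k) ∧ IsSRDColoring G c}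

/-! If any two distinct vertices `u`, `v` stay connected after deleting fewer than
`min (deg u) (deg v)` edges, the edges at the endpoint of smaller degree form a minimum cut, so
every proper edge colouring is a strong rainbow disconnection colouring. Two vertices of degree `k`
in turn force `k` colours.

In a box product of connected graphs, deleting a set `F` of fewer than `min |V(G)| |V(H)|` edges
misses some row and some column entirely. If `F` is also smaller than the degree of `w`, then `w`
still reaches their crossing: the routes that step to a neighbour and then follow the row or column
perpendicular to that step are pairwise edge-disjoint, so one of them avoids `F`. -/

section EdgeCuts

variable {V : Type*} {G : SimpleGraph V} {u v : V} {F : Finset (Sym2 V)} {k : ℕ}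

lemma CutsBetween.symm (hF : CutsBetween G u v F) : CutsBetween G v u F :=
  ⟨hF.1, fun h => hF.2 h.symm⟩

lemma CutsBetween.le_card (hF : CutsBetween G u v F) (h : G.IsEdgeReachable k u v) :
    k ≤ F.card := by
  by_contra! hlt
  exact hF.2 (h (by rwa [Set.encard_coe_eq_coe_finsetCard, Nat.cast_lt]))

lemma lam_comm (G : SimpleGraph V) (u v : V) : lam G u v = lam G v u := by
  have hcut (F) : CutsBetween G u v F ↔ CutsBetween G v u F := ⟨.symm, .symm⟩
  simp only [lam, hcut]

lemma CutsBetween.card_eq_lam (hF : CutsBetween G u v F) (h : G.IsEdgeReachable F.card u v) :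
    F.card = lam G u v := by
  refine le_antisymm (le_csInf ⟨_, F, hF, rfl⟩ ?_) (Nat.sInf_le ⟨F, hF, rfl⟩)
  rintro _ ⟨F', hF', rfl⟩
  exact hF'.le_card h

lemma cutsBetween_incidenceFinset [DecidableEq V] [Fintype (G.neighborSet u)] (huv : u ≠ v) :
    CutsBetween G u v (G.incidenceFinset u) := by
  rw [CutsBetween, coe_incidenceFinset]
  refine ⟨G.incidenceSet_subset u, ?_⟩
  rintro ⟨_ | ⟨h, -⟩⟩
  · exact huv rfl
  · rw [deleteEdges_adj] at h
    exact h.2 ((G.mk'_mem_incidenceSet_left_iff).2 h.1)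

end EdgeCuts

section EdgeColorings

variable {V : Type*} {G : SimpleGraph V} {u v : V} {c : Sym2 V → ℕ} {k : ℕ}

lemma lineGraph_colorable_iff_exists_injOn_incidenceSet :
    G.lineGraph.Colorable k ↔
      ∃ c : Sym2 V → ℕ, (∀ e ∈ G.edgeSet, c e < k) ∧ ∀ v, Set.InjOn c (G.incidenceSet v) := by
  classical
  refine ⟨fun ⟨C⟩ => ⟨fun e => if he : e ∈ G.edgeSet then C ⟨e, he⟩ else 0, ?_, ?_⟩, ?_⟩
  · intro e he
    simp only [he, dite_true, Fin.is_lt]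
  · intro v e he f hf hef
    by_contra hne
    simp only [he.1, hf.1, dite_true] at hef
    refine C.valid (v := ⟨e, he.1⟩) (w := ⟨f, hf.1⟩) ?_ (Fin.ext hef)
    exact lineGraph_adj_iff_exists.2 ⟨fun h => hne (congrArg Subtype.val h), v, he.2, hf.2⟩
  · rintro ⟨c, hck, hc⟩
    refine ⟨Coloring.mk (fun e => ⟨c e, hck e e.2⟩) fun {e f} hef h => ?_⟩
    obtain ⟨hne, v, he, hf⟩ := lineGraph_adj_iff_exists.1 hef
    exact hne (Subtype.ext (hc v ⟨e.2, he⟩ ⟨f.2, hf⟩ (congrArg Fin.val h)))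

lemma degree_le_of_lineGraph_colorable [Fintype (G.neighborSet u)]
    (hG : G.lineGraph.Colorable k) : G.degree u ≤ k := by
  classical
  obtain ⟨c, hck, hc⟩ := lineGraph_colorable_iff_exists_injOn_incidenceSet.1 hG
  rw [← card_incidenceFinset_eq_degree, ← Finset.card_range k]
  refine Finset.card_le_card_of_injOn c (fun e he => ?_) ?_
  · exact Finset.mem_coe.2 (Finset.mem_range.2 (hck e ((G.mem_incidenceFinset u e).1 he).1))
  · rw [coe_incidenceFinset]
    exact hc u

lemma IsSRDColoring.le_of_isEdgeReachable {l : ℕ} (hc : IsSRDColoring G c)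
    (hck : ∀ e ∈ G.edgeSet, c e < k) (huv : u ≠ v) (h : G.IsEdgeReachable l u v) : l ≤ k := by
  obtain ⟨F, hF, -, hinj⟩ := hc u v huv
  calc
    l ≤ F.card := hF.le_card h
    _ ≤ (Finset.range k).card :=
      Finset.card_le_card_of_injOn c (fun e he => by simpa using hck e (hF.1 he)) hinj
    _ = k := Finset.card_range k

variable [G.LocallyFinite]

lemma isSRDColoring_of_injOn_incidenceSet (hc : ∀ v, Set.InjOn c (G.incidenceSet v))
    (hG : ∀ u v, G.IsEdgeReachable (min (G.degree u) (G.degree v)) u v) : IsSRDColoring G c := by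
  classical
  have rainbow_cut {u v : V} (huv : u ≠ v) (hdeg : G.degree u ≤ G.degree v) :
      ∃ F, CutsBetween G u v F ∧ F.card = lam G u v ∧ Set.InjOn c ↑F := by
    have hcut := cutsBetween_incidenceFinset (G := G) huv
    refine ⟨G.incidenceFinset u, hcut, hcut.card_eq_lam ?_, ?_⟩
    · rw [card_incidenceFinset_eq_degree, ← min_eq_left hdeg]
      exact hG u v
    · rw [coe_incidenceFinset]
      exact hc u
  intro u v huv
  rcases le_total (G.degree u) (G.degree v) with hdeg | hdeg
  · exact rainbow_cut huv hdeg
  · obtain ⟨F, hF, hcard, hinj⟩ := rainbow_cut huv.symm hdeg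
    exact ⟨F, hF.symm, hcard.trans (lam_comm G v u), hinj⟩

lemma srd_eq_of_isEdgeReachable_min_degree
    (hG : ∀ u v, G.IsEdgeReachable (min (G.degree u) (G.degree v)) u v)
    (hcol : G.lineGraph.Colorable k) (huv : u ≠ v) (hu : G.degree u = k) (hv : G.degree v = k) :
    srd G = k := by
  obtain ⟨c, hck, hc⟩ := lineGraph_colorable_iff_exists_injOn_incidenceSet.1 hcol
  have hsrd := isSRDColoring_of_injOn_incidenceSet hc hG
  refine le_antisymm (Nat.sInf_le ⟨c, hck, hsrd⟩) (le_csInf ⟨k, c, hck, hsrd⟩ ?_)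
  rintro l ⟨d, hdl, hd⟩
  have hk : G.IsEdgeReachable k u v := by simpa only [hu, hv, min_self] using hG u v
  exact hd.le_of_isEdgeReachable hdl huv hk

end EdgeColorings

lemma exists_disjoint_of_encard_lt {ι γ : Type*} {s : Set ι} {E : ι → Set γ}
    (hE : s.PairwiseDisjoint E) {F : Set γ} (hF : F.encard < s.encard) :
    ∃ i ∈ s, Disjoint (E i) F := by
  by_contra! h
  simp only [Set.not_disjoint_iff] at h
  choose f hfE hfF using h
  let g (i : s) : F := ⟨f i i.2, hfF i i.2⟩
  have g_injective : Function.Injective g := fun i j hij => by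
    have hval : f i i.2 = f j j.2 := congrArg Subtype.val hij
    exact Subtype.ext (hE.elim_set i.2 j.2 (f i i.2) (hfE i i.2) (hval ▸ hfE j j.2))
  exact hF.not_ge (Function.Embedding.encard_le ⟨g, g_injective⟩)

section Fibers

variable {V W γ : Type*} {K : SimpleGraph V} {p : V → γ} {F : Set (Sym2 V)}

/-- The edges of `K` inside the fibre of `p` over `a`. For a box product, `p = Prod.fst` gives its
columns and `p = Prod.snd` its rows. -/
def fiberEdges (K : SimpleGraph V) (p : V → γ) (a : γ) : Set (Sym2 V) :=
  K.edgeSet ∩ (p ⁻¹' {a}).sym2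

lemma mk_mem_fiberEdges {a : γ} {x y : V} :
    s(x, y) ∈ fiberEdges K p a ↔ K.Adj x y ∧ p x = a ∧ p y = a :=
  Iff.rfl

lemma pairwiseDisjoint_fiberEdges (K : SimpleGraph V) (p : V → γ) :
    (Set.univ : Set γ).PairwiseDisjoint (fiberEdges K p) := by
  refine fun a _ b _ hab => Set.disjoint_left.2 fun e => ?_
  induction e with
  | h x y => exact fun ha hb => hab (ha.2.1.symm.trans hb.2.1)

lemma exists_disjoint_fiberEdges (K : SimpleGraph V) (p : V → γ) (hF : F.encard < ENat.card γ) :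
    ∃ a, Disjoint (fiberEdges K p a) F := by
  rw [← Set.encard_univ] at hF
  obtain ⟨a, -, ha⟩ := exists_disjoint_of_encard_lt (pairwiseDisjoint_fiberEdges K p) hF
  exact ⟨a, ha⟩

lemma reachable_deleteEdges_of_disjoint_fiberEdges {H : SimpleGraph W} (hH : H.Preconnected)
    (f : H →g K) {a : γ} (hf : ∀ b, p (f b) = a) (hF : Disjoint (fiberEdges K p a) F) (b b' : W) :
    (K.deleteEdges F).Reachable (f b) (f b') := by
  let g : H →g K.deleteEdges F :=
    ⟨f, fun {b b'} h => deleteEdges_adj.2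
      ⟨f.map_adj h, Set.disjoint_left.1 hF ⟨f.map_adj h, hf b, hf b'⟩⟩⟩
  exact (hH b b').map g

end Fibers

section BoxProd

variable {α β : Type*} {G : SimpleGraph α} {H : SimpleGraph β}

section EdgeConnectivity

variable {F : Set (Sym2 (α × β))} {a : α} {b : β} {w x : α × β}

lemma disjoint_fiberEdges_fst_snd (G : SimpleGraph α) (H : SimpleGraph β) (a : α) (b : β) :
    Disjoint (fiberEdges (G □ H) Prod.fst a) (fiberEdges (G □ H) Prod.snd b) := by
  refine Set.disjoint_left.2 fun e => ?_
  induction e with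
  | h x y =>
    intro hcol hrow
    obtain ⟨hadj, hx₁, hy₁⟩ := mk_mem_fiberEdges.1 hcol
    obtain ⟨-, hx₂, hy₂⟩ := mk_mem_fiberEdges.1 hrow
    exact hadj.ne (Prod.ext (hx₁.trans hy₁.symm) (hx₂.trans hy₂.symm))

lemma reachable_column (hH : H.Preconnected) (ha : Disjoint (fiberEdges (G □ H) Prod.fst a) F)
    (b b' : β) : ((G □ H).deleteEdges F).Reachable (a, b) (a, b') :=
  reachable_deleteEdges_of_disjoint_fiberEdges hH (G.boxProdRight H a).toHom (fun _ => rfl) ha b b'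

lemma reachable_row (hG : G.Preconnected) (hb : Disjoint (fiberEdges (G □ H) Prod.snd b) F)
    (a a' : α) : ((G □ H).deleteEdges F).Reachable (a, b) (a', b) :=
  reachable_deleteEdges_of_disjoint_fiberEdges hG (G.boxProdLeft H b).toHom (fun _ => rfl) hb a a'

open Classical in
/-- The edges of the row or column of `G □ H` through `x` that is perpendicular to `wx`, for a
neighbour `x` of `w`. -/
def perpEdges (G : SimpleGraph α) (H : SimpleGraph β) (w x : α × β) : Set (Sym2 (α × β)) :=
  if x.2 = w.2 then fiberEdges (G □ H) Prod.fst x.1 else fiberEdges (G □ H) Prod.snd x.2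

lemma notMem_of_mem_perpEdges (hwx : (G □ H).Adj w x) {e : Sym2 (α × β)}
    (he : e ∈ perpEdges G H w x) : w ∉ e := by
  intro hwe
  unfold perpEdges at he
  split_ifs at he with hrow
  · exact hwx.ne (Prod.ext ((Set.mem_sym2_iff_subset.1 he.2) hwe) hrow.symm)
  · exact hrow ((Set.mem_sym2_iff_subset.1 he.2) hwe).symm

lemma pairwiseDisjoint_perpEdges (G : SimpleGraph α) (H : SimpleGraph β) (w : α × β) :
    ((G □ H).neighborSet w).PairwiseDisjoint (perpEdges G H w) := by
  intro x hwx y hwy hxy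
  unfold Function.onFun perpEdges
  split_ifs with hx hy hy
  · exact pairwiseDisjoint_fiberEdges _ _ trivial trivial fun h =>
      hxy (Prod.ext h (hx.trans hy.symm))
  · exact disjoint_fiberEdges_fst_snd G H x.1 y.2
  · exact (disjoint_fiberEdges_fst_snd G H y.1 x.2).symm
  · have fst_eq {z : α × β} (hwz : (G □ H).Adj w z) (hz : z.2 ≠ w.2) : z.1 = w.1 :=
      (hwz.resolve_left fun h => hz h.2.symm).2.symm
    exact pairwiseDisjoint_fiberEdges _ _ trivial trivial fun h =>
      hxy (Prod.ext ((fst_eq hwx hx).trans (fst_eq hwy hy).symm) h)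

/-- The edges used for leaving `w` through its neighbour `x`: the edge `wx`, and then the row or
column through `x` perpendicular to it. -/
def detour (G : SimpleGraph α) (H : SimpleGraph β) (w x : α × β) : Set (Sym2 (α × β)) :=
  insert s(w, x) (perpEdges G H w x)

lemma pairwiseDisjoint_detour (G : SimpleGraph α) (H : SimpleGraph β) (w : α × β) :
    ((G □ H).neighborSet w).PairwiseDisjoint (detour G H w) := by
  intro x hwx y hwy hxy
  refine Set.disjoint_left.2 ?_
  rintro e (rfl | hx) (hy | hy)
  · exact hxy (Sym2.congr_right.1 hy)
  · exact notMem_of_mem_perpEdges hwy hy (Sym2.mem_mk_left w x)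
  · exact notMem_of_mem_perpEdges hwx hx (hy ▸ Sym2.mem_mk_left w y)
  · exact (pairwiseDisjoint_perpEdges G H w hwx hwy hxy).notMem_of_mem_left hx hy

lemma reachable_of_disjoint_detour (hG : G.Preconnected) (hH : H.Preconnected)
    (hwx : (G □ H).Adj w x) (hx : Disjoint (detour G H w x) F)
    (ha : Disjoint (fiberEdges (G □ H) Prod.fst a) F)
    (hb : Disjoint (fiberEdges (G □ H) Prod.snd b) F) :
    ((G □ H).deleteEdges F).Reachable w (a, b) := by
  obtain ⟨hedge, hfiber⟩ := Set.disjoint_insert_left.1 hx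
  refine (Adj.reachable (deleteEdges_adj.2 ⟨hwx, hedge⟩)).trans ?_
  unfold perpEdges at hfiber
  split_ifs at hfiber
  · exact (reachable_column hH hfiber x.2 b).trans (reachable_row hG hb x.1 a)
  · exact (reachable_row hG hfiber x.1 a).trans (reachable_column hH ha x.2 b)

lemma isEdgeReachable_boxProd (hG : G.Preconnected) (hH : H.Preconnected) {k : ℕ}
    (hα : k ≤ ENat.card α) (hβ : k ≤ ENat.card β) {u v : α × β}
    (hu : k ≤ ((G □ H).neighborSet u).encard) (hv : k ≤ ((G □ H).neighborSet v).encard) :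
    (G □ H).IsEdgeReachable k u v := by
  intro F hF
  obtain ⟨a, ha⟩ := exists_disjoint_fiberEdges (G □ H) Prod.fst (hF.trans_le hα)
  obtain ⟨b, hb⟩ := exists_disjoint_fiberEdges (G □ H) Prod.snd (hF.trans_le hβ)
  have reach_crossing {w : α × β} (hw : k ≤ ((G □ H).neighborSet w).encard) :
      ((G □ H).deleteEdges F).Reachable w (a, b) := by
    obtain ⟨x, hwx, hx⟩ :=
      exists_disjoint_of_encard_lt (pairwiseDisjoint_detour G H w) (hF.trans_le hw)
    exact reachable_of_disjoint_detour hG hH hwx hx ha hb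
  exact (reach_crossing hu).trans (reach_crossing hv).symm

end EdgeConnectivity

lemma lineGraph_boxProd_colorable {p q : ℕ} (hG : G.lineGraph.Colorable p)
    (hH : H.lineGraph.Colorable q) : (G □ H).lineGraph.Colorable (p + q) := by
  classical
  obtain ⟨c, hcp, hc⟩ := lineGraph_colorable_iff_exists_injOn_incidenceSet.1 hG
  obtain ⟨d, hdq, hd⟩ := lineGraph_colorable_iff_exists_injOn_incidenceSet.1 hH
  let color (e : Sym2 (α × β)) : ℕ :=
    if (e.map Prod.snd).IsDiag then c (e.map Prod.fst) else p + d (e.map Prod.snd)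
  have color_row (a a' : α) (b : β) : color s((a, b), (a', b)) = c s(a, a') := by simp [color]
  have color_column (a : α) {b b' : β} (h : b ≠ b') :
      color s((a, b), (a, b')) = p + d s(b, b') := by simp [color, h]
  refine lineGraph_colorable_iff_exists_injOn_incidenceSet.2 ⟨color, fun e he => ?_, ?_⟩
  · induction e with
    | h x y =>
      obtain ⟨a, b⟩ := x
      obtain ⟨a', b'⟩ := y
      rcases he with ⟨h, rfl : b = b'⟩ | ⟨h, rfl : a = a'⟩
      · exact (color_row a a' b).trans_lt ((hcp s(a, a') h).trans_le (Nat.le_add_right p q))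
      · exact (color_column a h.ne).trans_lt (Nat.add_lt_add_left (hdq s(b, b') h) p)
  · rintro ⟨a, b⟩ e ⟨he, ⟨a₁, b₁⟩, rfl⟩ f ⟨hf, ⟨a₂, b₂⟩, rfl⟩ hef
    rcases he with ⟨h₁, rfl : b = b₁⟩ | ⟨h₁, rfl : a = a₁⟩ <;>
      rcases hf with ⟨h₂, rfl : b = b₂⟩ | ⟨h₂, rfl : a = a₂⟩
    · rw [color_row, color_row] at hef
      have hedge := hc a ⟨h₁, Sym2.mem_mk_left a a₁⟩ ⟨h₂, Sym2.mem_mk_left a a₂⟩ hef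
      rw [Sym2.congr_right.1 hedge]
    · rw [color_row, color_column a h₂.ne] at hef
      have := hcp s(a, a₁) h₁
      omega
    · rw [color_row, color_column a h₁.ne] at hef
      have := hcp s(a, a₂) h₂
      omega
    · rw [color_column a h₁.ne, color_column a h₂.ne] at hef
      have hedge :=
        hd b ⟨h₁, Sym2.mem_mk_left b b₁⟩ ⟨h₂, Sym2.mem_mk_left b b₂⟩ (Nat.add_left_cancel hef)
      rw [Sym2.congr_right.1 hedge]

end BoxProd

theorem stmt13_general {α β : Type*} {G : SimpleGraph α} {H : SimpleGraph β} [G.LocallyFinite]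
    [H.LocallyFinite] (hG : G.Preconnected) (hH : H.Preconnected) {p q : ℕ}
    (hp : G.lineGraph.Colorable p) (hq : H.lineGraph.Colorable q)
    (hα : (p + q : ℕ) ≤ ENat.card α) (hβ : (p + q : ℕ) ≤ ENat.card β) {u v : α × β} (huv : u ≠ v)
    (hu : (G □ H).degree u = p + q) (hv : (G □ H).degree v = p + q) : srd (G □ H) = p + q := by
  have hcol := lineGraph_boxProd_colorable hp hq
  refine srd_eq_of_isEdgeReachable_min_degree (fun x y => ?_) hcol huv hu hv
  have hle : min ((G □ H).degree x) ((G □ H).degree y) ≤ p + q :=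
    (min_le_left _ _).trans (degree_le_of_lineGraph_colorable hcol)
  have degree_eq (z) : ((G □ H).degree z : ℕ∞) = ((G □ H).neighborSet z).encard := by
    rw [← card_neighborSet_eq_degree, Set.coe_fintypeCard]
  refine isEdgeReachable_boxProd hG hH ?_ ?_ ?_ ?_
  · exact (Nat.cast_le.2 hle).trans hα
  · exact (Nat.cast_le.2 hle).trans hβ
  · exact degree_eq x ▸ Nat.cast_le.2 (min_le_left _ _)
  · exact degree_eq y ▸ Nat.cast_le.2 (min_le_right _ _)

section PathGraph

lemma lineGraph_pathGraph_colorable (n : ℕ) : (pathGraph n).lineGraph.Colorable 2 := by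
  refine lineGraph_colorable_iff_exists_injOn_incidenceSet.2
    ⟨fun e => e.inf % 2, fun e _ => Nat.mod_lt _ two_pos, fun i e he f hf hef => ?_⟩
  obtain ⟨j, rfl⟩ := he.2
  obtain ⟨k, rfl⟩ := hf.2
  have hij := he.1
  have hik := hf.1
  simp only [mem_edgeSet, pathGraph_adj] at hij hik
  simp only [Sym2.inf_mk] at hef
  have hjk : j = k := by grind
  rw [hjk]

lemma degree_pathGraph_eq_two {n : ℕ} {i : Fin n} [Fintype ((pathGraph n).neighborSet i)]
    (hpos : 0 < i.val) (hlt : i.val + 1 < n) : (pathGraph n).degree i = 2 := by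
  have hnbr : (pathGraph n).neighborFinset i = {⟨i - 1, by omega⟩, ⟨i + 1, hlt⟩} := by
    ext j
    simp only [mem_neighborFinset, pathGraph_adj, Finset.mem_insert, Finset.mem_singleton,
      Fin.ext_iff]
    omega
  rw [degree, hnbr, Finset.card_pair]
  simp only [ne_eq, Fin.mk.injEq]
  omega

lemma degree_boxProd_pathGraph_eq_four {m n : ℕ} {x : Fin m × Fin n}
    [Fintype ((pathGraph m □ pathGraph n).neighborSet x)] (h₁ : 0 < x.1.val ∧ x.1.val + 1 < m)
    (h₂ : 0 < x.2.val ∧ x.2.val + 1 < n) : (pathGraph m □ pathGraph n).degree x = 4 := by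
  classical
  rw [degree_boxProd, degree_pathGraph_eq_two h₁.1 h₁.2, degree_pathGraph_eq_two h₂.1 h₂.2]

end PathGraph

theorem stmt13 (m n : ℕ) (hm : 4 ≤ m) (hmn : m ≤ n) :
    srd (SimpleGraph.pathGraph m □ SimpleGraph.pathGraph n) = 4 := by
  classical
  exact stmt13_general (pathGraph_preconnected m) (pathGraph_preconnected n)
    (lineGraph_pathGraph_colorable m) (lineGraph_pathGraph_colorable n)
    (by simpa using hm) (by simpa using hm.trans hmn)
    (u := (⟨1, by omega⟩, ⟨1, by omega⟩)) (v := (⟨1, by omega⟩, ⟨2, by omega⟩)) (by simp)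
    (degree_boxProd_pathGraph_eq_four (by grind) (by grind))
    (degree_boxProd_pathGraph_eq_four (by grind) (by grind))
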